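/- arXiv:2111.01654 — 4 statements merged into one kernel-verified Lean document; each statement's English description precedes it below -/
import Mathlib

section
/- Announcement–relativized-common-knowledge reduction axiom: for every epistemic model M, every group of agents G ⊆ A, every world w, and all formulas φ, ψ, χ, it holds that M,w ⊨ [!φ]C_G(χ | ψ) ↔ (φ → C_G(φ ∧ [!φ]χ | [!φ]ψ)). -/
/-- Syntax of public announcement logic with relativized common knowledge.
`Agent` is the set of agents, `AtomP` the set of atomic propositions. -/
inductive Form (Agent AtomP : Type) : Type
  | top  : Form Agent AtomP
  | atom : AtomP → Form Agent AtomP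
  | neg  : Form Agent AtomP → Form Agent AtomP
  | or   : Form Agent AtomP → Form Agent AtomP → Form Agent AtomP
  | know : Agent → Form Agent AtomP → Form Agent AtomP
  | ev   : Set Agent → Form Agent AtomP → Form Agent AtomP
  | ck   : Set Agent → Form Agent AtomP → Form Agent AtomP → Form Agent AtomP
  | ann  : Form Agent AtomP → Form Agent AtomP → Form Agent AtomP

namespace Form
variable {Agent AtomP : Type}
/-- φ ∧ ψ -/
def and (φ ψ : Form Agent AtomP) : Form Agent AtomP := .neg (.or (.neg φ) (.neg ψ))
/-- φ → ψ -/
def imp (φ ψ : Form Agent AtomP) : Form Agent AtomP := .or (.neg φ) ψ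
/-- φ ↔ ψ -/
def iff (φ ψ : Form Agent AtomP) : Form Agent AtomP := (φ.imp ψ).and (ψ.imp φ)
end Form

/-- Truth of a PAL formula at world `w` of the epistemic model given by the set of
worlds `W`, accessibility relations `R` and valuation `V`.  A public announcement
`[!φ]ψ` is evaluated in the updated model whose worlds are the subtype of worlds
satisfying `φ`, with accessibility relations and valuation restricted accordingly. -/
def Sat {Agent AtomP : Type} :
    Form Agent AtomP → (W : Type) → (Agent → W → W → Prop) → (AtomP → Set W) → W → Prop
  | .top, _, _, _, _ => True
  | .atom p, _, _, V, w => w ∈ V p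
  | .neg φ, W, R, V, w => ¬ Sat φ W R V w
  | .or φ ψ, W, R, V, w => Sat φ W R V w ∨ Sat ψ W R V w
  | .know i φ, W, R, V, w => ∀ v, R i w v → Sat φ W R V v
  | .ev G φ, W, R, V, w => ∀ v, (∃ i ∈ G, R i w v) → Sat φ W R V v
  | .ck G φ ψ, W, R, V, w =>
      ∀ v, Relation.TransGen (fun u u' => (∃ i ∈ G, R i u u') ∧ Sat φ W R V u') w v →
        Sat ψ W R V v
  | .ann φ ψ, W, R, V, w =>
      ∀ h : Sat φ W R V w,
        Sat ψ {v : W // Sat φ W R V v} (fun i x y => R i x.1 y.1)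
          (fun p => {x : {v : W // Sat φ W R V v} | x.1 ∈ V p}) ⟨w, h⟩

/-- A formula is valid iff it is true at every world of every epistemic model. -/
def Valid {Agent AtomP : Type} (φ : Form Agent AtomP) : Prop :=
  ∀ (W : Type), Nonempty W → ∀ (R : Agent → W → W → Prop) (V : AtomP → Set W) (w : W),
    Sat φ W R V w

/-- Truth clause for the defined conjunction. -/
theorem sat_and {Agent AtomP W : Type} {R : Agent → W → W → Prop} {V : AtomP → Set W} {w : W}
    {φ ψ : Form Agent AtomP} :
    Sat (φ.and ψ) W R V w ↔ Sat φ W R V w ∧ Sat ψ W R V w := by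
  simp only [Form.and, Sat, not_or, not_not]

/-- Truth clause for the defined implication. -/
theorem sat_imp {Agent AtomP W : Type} {R : Agent → W → W → Prop} {V : AtomP → Set W} {w : W}
    {φ ψ : Form Agent AtomP} :
    Sat (φ.imp ψ) W R V w ↔ (Sat φ W R V w → Sat ψ W R V w) := by
  simp only [Form.imp, Sat, imp_iff_not_or]

/-- Truth clause for the defined biconditional. -/
theorem sat_iff {Agent AtomP W : Type} {R : Agent → W → W → Prop} {V : AtomP → Set W} {w : W}
    {φ ψ : Form Agent AtomP} :
    Sat (φ.iff ψ) W R V w ↔ (Sat φ W R V w ↔ Sat ψ W R V w) := by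
  rw [Form.iff, sat_and, sat_imp, sat_imp, ← iff_iff_implies_and_implies]

/-- Paths in a subtype whose targets satisfy `q` are paths in the ambient type whose targets
lie in the subtype and satisfy `q` there. -/
theorem transGen_subtype_iff {α : Type*} {p : α → Prop} {r : α → α → Prop}
    {q : Subtype p → Prop} {a b : Subtype p} :
    Relation.TransGen (fun x y : Subtype p => r x y ∧ q y) a b ↔
      Relation.TransGen (fun x y => r x y ∧ p y ∧ ∀ h : p y, q ⟨y, h⟩) (a : α) b := by
  refine ⟨fun h => h.lift Subtype.val fun x y hxy => ⟨hxy.1, y.2, fun _ => hxy.2⟩, fun h => ?_⟩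
  suffices ∀ c, Relation.TransGen (fun x y => r x y ∧ p y ∧ ∀ h : p y, q ⟨y, h⟩) (a : α) c →
      ∀ hc : p c, Relation.TransGen (fun x y : Subtype p => r x y ∧ q y) a ⟨c, hc⟩ from
    this b h b.2
  intro c h
  induction h with
  | single hab => exact fun hc => .single ⟨hab.1, hab.2.2 hc⟩
  | @tail c d hac hcd ih =>
    intro hd
    have hc : p c := by cases hac with
      | single hab => exact hab.2.1
      | tail _ hbc => exact hbc.2.1
    exact (ih hc).tail ⟨hcd.1, hcd.2.2 hd⟩

/-- Announcement–relativized-common-knowledge reduction: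
`M,w ⊨ [!φ]C_G(χ | ψ) ↔ (φ → C_G(φ ∧ [!φ]χ | [!φ]ψ))`.
Here `Form.ck G χ ψ` denotes `C_G(χ | ψ)`. -/
theorem annRelativizedCK {Agent AtomP : Type} (W : Type) (hW : Nonempty W)
    (R : Agent → W → W → Prop) (V : AtomP → Set W) (G : Set Agent) (w : W)
    (φ ψ χ : Form Agent AtomP) :
    Sat ((Form.ann φ (Form.ck G χ ψ)).iff
          (φ.imp (Form.ck G (φ.and (Form.ann φ χ)) (Form.ann φ ψ)))) W R V w := by
  rw [sat_iff, sat_imp]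
  simp only [Sat, sat_and]
  refine forall_congr' fun hw => ⟨fun H v hv hφ => ?_, fun H v hv => ?_⟩
  · exact H ⟨v, hφ⟩ ((transGen_subtype_iff (r := fun u v => ∃ i ∈ G, R i u v)).2 hv)
  · exact H v ((transGen_subtype_iff (r := fun u v => ∃ i ∈ G, R i u v)).1 hv) v.2
end

section
/- Mix axiom for relativized common knowledge: for every epistemic model M, every group of agents G ⊆ A, every world w, and all formulas φ, ψ, it holds that M,w ⊨ C_G(ψ | φ) ↔ E_G(ψ → (φ ∧ C_G(ψ | φ))). -/
namespace Sat
variable {Agent AtomP W : Type} {R : Agent → W → W → Prop} {V : AtomP → Set W} {w : W}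
  {φ ψ : Form Agent AtomP}

theorem and_iff : Sat (φ.and ψ) W R V w ↔ Sat φ W R V w ∧ Sat ψ W R V w := by
  simp only [Form.and, Sat]
  tauto

theorem imp_iff : Sat (φ.imp ψ) W R V w ↔ (Sat φ W R V w → Sat ψ W R V w) := by
  simp only [Form.imp, Sat]
  tauto

theorem iff_iff : Sat (φ.iff ψ) W R V w ↔ (Sat φ W R V w ↔ Sat ψ W R V w) := by
  simp only [Form.iff, and_iff, imp_iff, iff_iff_implies_and_implies]

end Sat

/-- Mix axiom for relativized common knowledge:
`M,w ⊨ C_G(ψ | φ) ↔ E_G(ψ → (φ ∧ C_G(ψ | φ)))`.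
Here `Form.ck G ψ φ` denotes `C_G(ψ | φ)` and `Form.ev G` is mutual knowledge `E_G`. -/
theorem ckMix {Agent AtomP : Type} (W : Type) (hW : Nonempty W)
    (R : Agent → W → W → Prop) (V : AtomP → Set W) (G : Set Agent) (w : W)
    (φ ψ : Form Agent AtomP) :
    Sat ((Form.ck G ψ φ).iff (Form.ev G (ψ.imp (φ.and (Form.ck G ψ φ))))) W R V w := by
  rw [Sat.iff_iff]
  simp only [Sat, Sat.imp_iff, Sat.and_iff]
  constructor
  · intro h v hv hψ
    exact ⟨h v (.single ⟨hv, hψ⟩), fun u hu => h u (.head ⟨hv, hψ⟩ hu)⟩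
  · intro h v hv
    rcases Relation.TransGen.head'_iff.1 hv with ⟨u, ⟨hu, hψ⟩, huv⟩
    obtain ⟨hφ, hck⟩ := h u hu hψ
    rcases Relation.reflTransGen_iff_eq_or_transGen.1 huv with rfl | huv
    · exact hφ
    · exact hck v huv
end

section
/- Positive visibility is entailed by negative visibility under S5: let M be an epistemic model over a group of agents A such that every accessibility relation R_i (i ∈ A) is an equivalence relation (reflexive, transitive and euclidean), and let a, b ∈ A and ws_a be an atomic proposition. If at every world it is common knowledge among A that ¬ws_a → K_b ¬ws_a (i.e., C_A(⊤ | ¬ws_a → K_b ¬ws_a) is true at every world of M, where ⊤ is a tautology), then at every world it is common knowledge among A that ws_a → K_b ws_a (i.e., C_A(⊤ | ws_a → K_b ws_a) is true at every world of M). -/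
/-- Positive visibility is entailed by negative visibility under S5:
if every accessibility relation is an equivalence relation and at every world it is
common knowledge among all agents that `¬ws_a → K_b ¬ws_a`, then at every world it
is common knowledge among all agents that `ws_a → K_b ws_a`.
Ordinary common knowledge of `ψ` among the group of all agents is `C_univ(⊤ | ψ)`,
encoded as `Form.ck Set.univ Form.top ψ`. -/
theorem positiveFromNegativeVisibility {Agent AtomP : Type} (W : Type) (hW : Nonempty W)
    (R : Agent → W → W → Prop) (V : AtomP → Set W)
    (hS5 : ∀ i : Agent, Equivalence (R i))
    (a b : Agent) (wsa : AtomP)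
    (hneg : ∀ w : W,
      Sat (Form.ck Set.univ Form.top
            ((Form.neg (Form.atom wsa)).imp (Form.know b (Form.neg (Form.atom wsa)))))
          W R V w) :
    ∀ w : W,
      Sat (Form.ck Set.univ Form.top
            ((Form.atom wsa).imp (Form.know b (Form.atom wsa)))) W R V w := by
  intro w v _
  by_cases hv : v ∈ V wsa
  · refine Or.inr fun u hvu => ?_
    by_contra hu
    rcases hneg u u (.single ⟨⟨b, trivial, (hS5 b).refl u⟩, trivial⟩) with h | h
    · exact h hu
    · exact h v ((hS5 b).symm hvu) hv
  · exact Or.inl hv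
end

section
/- The wise men puzzle with four agents: let M be an epistemic model over the group of agents A = {a, b, c, d} in which every accessibility relation is an equivalence relation (reflexive, transitive and euclidean), and let ws_a, ws_b, ws_c, ws_d be atomic propositions. Assume that at every world of M the following are common knowledge among A (in the sense of C_A(⊤|·) holding at every world): (1) ws_a ∨ ws_b ∨ ws_c ∨ ws_d; and (2) for every ordered pair of distinct agents x, y ∈ A, ¬ws_x → K_y ¬ws_x. Then at every world w of M it holds that M,w ⊨ [!¬K_a ws_a]([!¬K_b ws_b]([!¬K_c ws_c](K_d ws_d))); that is, after a, b and c have each publicly announced that they do not know they have a white spot, agent d knows that he has a white spot. -/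
/-- The four wise men `a`, `b`, `c`, `d`. -/
inductive WiseMan : Type
  | a | b | c | d
  deriving DecidableEq

/-- Suppose some member of `insert x S` has a white spot at every world, and `x` sees the absence
of white spots on the members of `S`.  Once `x` has announced that he does not know that he has
a white spot, some member of `S` has one at every remaining world, and this may be used to
establish `ψ` after the announcement. -/
theorem sat_ann_not_know {Agent W : Type} {R : Agent → W → W → Prop}
    {V : Agent → Set W} {x : Agent} {S : Set Agent} {ψ : Form Agent Agent}
    (hsome : ∀ w, ∃ y ∈ insert x S, w ∈ V y)
    (hsee : ∀ y ∈ S, ∀ w v, R x w v → w ∉ V y → v ∉ V y)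
    (hψ : let U := {v : W // Sat (Form.neg (Form.know x (Form.atom x))) W R V v}
      (∀ u : U, ∃ y ∈ S, u.1 ∈ V y) →
        ∀ u : U, Sat ψ U (fun i u v => R i u.1 v.1) (fun p => {u : U | u.1 ∈ V p}) u) (w : W) :
    Sat (Form.ann (Form.neg (Form.know x (Form.atom x))) ψ) W R V w := by
  refine fun hw => hψ (fun u => ?_) ⟨w, hw⟩
  by_contra hnone
  refine u.2 fun v hv => ?_
  obtain ⟨y, rfl | hy, hyv⟩ := hsome v
  · exact hyv
  · exact absurd hyv (hsee y hy u v hv fun h => hnone ⟨y, hy, h⟩)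

/-- The wise men puzzle with four agents.  The agents are
`A = {a,b,c,d}`; the atomic proposition `ws x` ("x has a white spot") is encoded by
the atom `x : WiseMan` itself.  Assume every accessibility relation is an equivalence
relation and that at every world the following are common knowledge among `A`
(`C_A(⊤|·)`, encoded as `Form.ck Set.univ Form.top ·`):
(1) `ws_a ∨ ws_b ∨ ws_c ∨ ws_d`, and
(2) for all distinct `x y ∈ A`, `¬ws_x → K_y ¬ws_x`.
Then at every world, `[!¬K_a ws_a][!¬K_b ws_b][!¬K_c ws_c] K_d ws_d` holds. -/
theorem wiseMenPuzzle (W : Type) (hW : Nonempty W)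
    (R : WiseMan → W → W → Prop) (V : WiseMan → Set W)
    (hS5 : ∀ i : WiseMan, Equivalence (R i))
    (h1 : ∀ w : W,
      Sat (Form.ck Set.univ Form.top
            ((((Form.atom WiseMan.a).or (Form.atom WiseMan.b)).or
                (Form.atom WiseMan.c)).or (Form.atom WiseMan.d))) W R V w)
    (h2 : ∀ x y : WiseMan, x ≠ y → ∀ w : W,
      Sat (Form.ck Set.univ Form.top
            ((Form.neg (Form.atom x)).imp (Form.know y (Form.neg (Form.atom x)))))
          W R V w) :
    ∀ w : W,
      Sat (Form.ann (Form.neg (Form.know WiseMan.a (Form.atom WiseMan.a)))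
            (Form.ann (Form.neg (Form.know WiseMan.b (Form.atom WiseMan.b)))
              (Form.ann (Form.neg (Form.know WiseMan.c (Form.atom WiseMan.c)))
                (Form.know WiseMan.d (Form.atom WiseMan.d))))) W R V w := by
  have step : ∀ w, Relation.TransGen
      (fun u u' => (∃ i ∈ (Set.univ : Set WiseMan), R i u u') ∧
        Sat (Form.top : Form WiseMan WiseMan) W R V u') w w :=
    fun w => .single ⟨⟨.a, trivial, (hS5 .a).refl w⟩, trivial⟩
  have hsome : ∀ w, ∃ y ∈ ({.a, .b, .c, .d} : Set WiseMan), w ∈ V y := by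
    intro w
    rcases h1 w w (step w) with ((h | h) | h) | h
    · exact ⟨.a, by simp, h⟩
    · exact ⟨.b, by simp, h⟩
    · exact ⟨.c, by simp, h⟩
    · exact ⟨.d, by simp, h⟩
  have hsee : ∀ x y, y ≠ x → ∀ w v, R x w v → w ∉ V y → v ∉ V y := by
    intro x y hne w v hv hw
    rcases h2 y x hne w w (step w) with h | h
    · exact absurd hw h
    · exact h v hv
  refine sat_ann_not_know (S := {.b, .c, .d}) hsome ?_ fun hsome_b => ?_
  · exact fun y hy => hsee .a y (by rintro rfl; simp at hy)
  refine sat_ann_not_know (S := {.c, .d}) hsome_b ?_ fun hsome_c => ?_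
  · exact fun y hy u v => hsee .b y (by rintro rfl; simp at hy) u.1 v.1
  refine sat_ann_not_know (S := {.d}) hsome_c ?_ fun hsome_d _ v _ => ?_
  · exact fun y hy u v => hsee .c y (by rintro rfl; simp at hy) u.1.1 v.1.1
  obtain ⟨y, rfl, hy⟩ := hsome_d v
  exact hy
end
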